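/- Let E be a module over L⁰ = L⁰(𝔉,ℝ) and (E, 𝒯) a topological L⁰-module (addition continuous and module multiplication L⁰ × E → E continuous with L⁰ carrying 𝒯_c). Suppose there exists a neighborhood base 𝒰 of 0 for 𝒯 such that every U ∈ 𝒰 is L⁰-convex, L⁰-absorbent and L⁰-balanced and has the countable concatenation property, and for each U ∈ 𝒰 let p_U : E → L⁰₊ satisfy that p_U(x) is the greatest lower bound in (L⁰, ≤) of {ξ ∈ L⁰₊ : x ∈ ξU} for every x ∈ E. Then 𝒯 equals the topology induced by the family of L⁰-seminorms {p_U : U ∈ 𝒰}. -/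

import Mathlib

noncomputable section

open MeasureTheory Set Pointwise Filter Topology

namespace PaperL0

variable {Ω : Type*} [MeasurableSpace Ω]

instance commRingL0 (μ : Measure Ω) : CommRing (Ω →ₘ[μ] ℝ) :=
  { (inferInstance : AddCommGroup (Ω →ₘ[μ] ℝ)),
    (inferInstance : CommMonoid (Ω →ₘ[μ] ℝ)) with
    left_distrib := fun f g h => MeasureTheory.AEEqFun.toGerm_injective <| by
      simp [MeasureTheory.AEEqFun.mul_toGerm, MeasureTheory.AEEqFun.add_toGerm, mul_add]
    right_distrib := fun f g h => MeasureTheory.AEEqFun.toGerm_injective <| by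
      simp [MeasureTheory.AEEqFun.mul_toGerm, MeasureTheory.AEEqFun.add_toGerm, add_mul]
    zero_mul := fun f => MeasureTheory.AEEqFun.toGerm_injective <| by
      simp [MeasureTheory.AEEqFun.mul_toGerm, MeasureTheory.AEEqFun.zero_toGerm]
    mul_zero := fun f => MeasureTheory.AEEqFun.toGerm_injective <| by
      simp [MeasureTheory.AEEqFun.mul_toGerm, MeasureTheory.AEEqFun.zero_toGerm] }

variable (μ : Measure Ω)

/-- `L⁰₊`, the set of nonnegative elements of `L⁰`. -/
def Lpos : Set (Ω →ₘ[μ] ℝ) := {ξ | 0 ≤ ξ}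

/-- `L⁰₊₊`, the set of elements of `L⁰` which are `> 0` a.e. on `Ω`. -/
def Lspos : Set (Ω →ₘ[μ] ℝ) := {ξ | ∀ᵐ ω ∂μ, 0 < ξ ω}

/-- The absolute value `|ξ|` of an element of `L⁰`. -/
def aabs {μ : Measure Ω} (ξ : Ω →ₘ[μ] ℝ) : Ω →ₘ[μ] ℝ := ξ ⊔ -ξ

/-- `B_ε = {ξ ∈ L⁰ : |ξ| ≤ ε}`. -/
def ball (ε : Ω →ₘ[μ] ℝ) : Set (Ω →ₘ[μ] ℝ) := {ξ | aabs ξ ≤ ε}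

open Classical in
/-- `Ĩ_A`, the equivalence class of the indicator function of a (measurable) set `A`. -/
def ind (A : Set Ω) : Ω →ₘ[μ] ℝ :=
  if h : MeasurableSet A then
    AEEqFun.mk (A.indicator fun _ => (1 : ℝ))
      ((measurable_const.indicator h).aestronglyMeasurable)
  else 0

/-- A countable measurable partition of `Ω`. -/
def IsMeasPartition (A : ℕ → Set Ω) : Prop :=
  (∀ n, MeasurableSet (A n)) ∧ Pairwise (Function.onFun Disjoint A) ∧ (⋃ n, A n) = Set.univ

variable {E : Type*} [AddCommGroup E] [Module (Ω →ₘ[μ] ℝ) E]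

/-- `L⁰`-convexity of a subset of an `L⁰`-module. -/
def IsL0Convex (U : Set E) : Prop :=
  ∀ x ∈ U, ∀ y ∈ U, ∀ ξ : Ω →ₘ[μ] ℝ, 0 ≤ ξ → ξ ≤ 1 → ξ • x + (1 - ξ) • y ∈ U

/-- `L⁰`-absorbency of a subset of an `L⁰`-module. -/
def IsL0Absorbent (U : Set E) : Prop := ∀ x : E, ∃ ξ ∈ Lspos μ, x ∈ ξ • U

/-- `L⁰`-balancedness of a subset of an `L⁰`-module. -/
def IsL0Balanced (U : Set E) : Prop :=
  ∀ x ∈ U, ∀ ξ : Ω →ₘ[μ] ℝ, aabs ξ ≤ 1 → ξ • x ∈ U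

/-- An `L⁰`-seminorm on an `L⁰`-module. -/
structure IsL0Seminorm (p : E → Ω →ₘ[μ] ℝ) : Prop where
  nonneg : ∀ x, 0 ≤ p x
  homog : ∀ (ξ : Ω →ₘ[μ] ℝ) (x : E), p (ξ • x) = aabs ξ * p x
  triangle : ∀ x y, p (x + y) ≤ p x + p y

/-- The countable concatenation property for a subset of an `L⁰`-module. -/
def HasCCP (G : Set E) : Prop :=
  ∀ x : ℕ → E, (∀ n, x n ∈ G) → ∀ A : ℕ → Set Ω, IsMeasPartition A →
    (∃ y : E, ∀ n, ind μ (A n) • y = ind μ (A n) • x n) ∧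
      ∀ y : E, (∀ n, ind μ (A n) • y = ind μ (A n) • x n) → y ∈ G

/-- The relative countable concatenation property for a subset of an `L⁰`-module. -/
def HasRelCCP (G : Set E) : Prop :=
  ∀ x : ℕ → E, (∀ n, x n ∈ G) → ∀ A : ℕ → Set Ω, IsMeasPartition A →
    ∀ y : E, (∀ n, ind μ (A n) • y = ind μ (A n) • x n) → y ∈ G

/-- A `P`-atom of a measure. -/
def IsPAtom (A : Set Ω) : Prop :=
  MeasurableSet A ∧ 0 < μ A ∧ ∀ B, MeasurableSet B → B ⊆ A → μ B = 0 ∨ μ B = μ A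

end PaperL0

open PaperL0

/-!
Continuity of scalar multiplication alone makes every `{u | p_U u ≤ ε}` a neighbourhood of `0`,
since it contains the dilate `ε • U`. The substance is the converse inclusion `{u | p_U u < 1} ⊆ U`.
The events `A` with `Ĩ_A • u ∈ U` are stable under countable unions by countable concatenation, so
up to null sets there is a largest one, `M`. If `u ∈ ξ • U`, balancedness puts the event `{ξ ≤ 1}`
inside `M`, so `Ĩ_{Mᶜ}` is a lower bound of the scalars defining `p_U u`. Hence
`Ĩ_{Mᶜ} ≤ p_U u < 1`, which makes `Mᶜ` a null set, and `u = Ĩ_M • u ∈ U`.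
-/

namespace PaperL0

variable {Ω : Type*} [MeasurableSpace Ω] {μ : Measure Ω}

section Scalars

theorem coeFn_ind {A : Set Ω} (hA : MeasurableSet A) : ind μ A =ᵐ[μ] A.indicator 1 := by
  rw [ind, dif_pos hA]
  exact AEEqFun.coeFn_mk _ _

theorem ind_mul_ind {A B : Set Ω} (hA : MeasurableSet A) (hB : MeasurableSet B) :
    ind μ A * ind μ B = ind μ (A ∩ B) := by
  apply AEEqFun.ext
  filter_upwards [AEEqFun.coeFn_mul (ind μ A) (ind μ B), coeFn_ind (μ := μ) hA,
    coeFn_ind (μ := μ) hB, coeFn_ind (μ := μ) (hA.inter hB)] with ω hmul hωA hωB hωAB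
  rw [hmul, Pi.mul_apply, hωA, hωB, hωAB, inter_indicator_one, Pi.mul_apply]

theorem ind_empty : ind μ (∅ : Set Ω) = 0 := by
  apply AEEqFun.ext
  refine (coeFn_ind MeasurableSet.empty).trans ?_
  rw [indicator_empty]
  exact AEEqFun.coeFn_zero.symm

theorem ind_eq_one {A : Set Ω} (hA : MeasurableSet A) (hfull : ∀ᵐ ω ∂μ, ω ∈ A) :
    ind μ A = 1 := by
  apply AEEqFun.ext
  filter_upwards [coeFn_ind (μ := μ) hA, AEEqFun.coeFn_one (μ := μ) (β := ℝ), hfull]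
    with ω hind hone hω
  rw [hind, indicator_of_mem hω, hone]

theorem aabs_le_one {ξ : Ω →ₘ[μ] ℝ} (hξ : ∀ᵐ ω ∂μ, ξ ω ∈ Icc (0 : ℝ) 1) : aabs ξ ≤ 1 := by
  refine sup_le (AEEqFun.coeFn_le.1 ?_) (AEEqFun.coeFn_le.1 ?_)
  · filter_upwards [hξ, AEEqFun.coeFn_one (μ := μ) (β := ℝ)] with ω hω hone
    rw [hone]
    exact hω.2
  · filter_upwards [hξ, AEEqFun.coeFn_one (μ := μ) (β := ℝ), AEEqFun.coeFn_neg ξ]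
      with ω hω hone hneg
    rw [hneg, hone, Pi.neg_apply, Pi.one_apply]
    linarith [hω.1]

theorem aabs_ind_le_one_mul {ξ : Ω →ₘ[μ] ℝ} (hξ : 0 ≤ ξ) :
    aabs (ind μ {ω | ξ ω ≤ 1} * ξ) ≤ 1 := by
  have hmeas : MeasurableSet {ω | ξ ω ≤ 1} := measurableSet_le ξ.measurable measurable_const
  apply aabs_le_one
  filter_upwards [AEEqFun.coeFn_mul (ind μ {ω | ξ ω ≤ 1}) ξ, coeFn_ind (μ := μ) hmeas,
    AEEqFun.coeFn_le.2 hξ, AEEqFun.coeFn_zero (μ := μ) (β := ℝ)] with ω hmul hind hnonneg hzero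
  rw [hzero] at hnonneg
  rw [hmul, Pi.mul_apply, hind]
  by_cases hω : ξ ω ≤ 1
  · simpa [hω] using hnonneg
  · simp [hω]

theorem ind_compl_le {M : Set Ω} (hM : MeasurableSet M) {ξ : Ω →ₘ[μ] ℝ} (hξ : 0 ≤ ξ)
    (hsub : {ω | ξ ω ≤ 1} ≤ᵐ[μ] M) : ind μ Mᶜ ≤ ξ := by
  apply AEEqFun.coeFn_le.1
  filter_upwards [coeFn_ind (μ := μ) hM.compl, hsub, AEEqFun.coeFn_le.2 hξ,
    AEEqFun.coeFn_zero (μ := μ) (β := ℝ)] with ω hind hω hnonneg hzero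
  rw [hzero] at hnonneg
  rw [hind]
  by_cases hωM : ω ∈ M
  · simpa [hωM] using hnonneg
  · have hlt : 1 < ξ ω := not_le.1 fun hle => hωM (hω hle)
    simpa [hωM] using hlt.le

theorem const_mem_Lspos {c : ℝ} (hc : 0 < c) : AEEqFun.const Ω c ∈ Lspos μ := by
  filter_upwards [AEEqFun.coeFn_const (μ := μ) Ω c] with ω hω
  simpa only [hω, Function.const_apply] using hc

theorem inf_mem_Lspos {ε δ : Ω →ₘ[μ] ℝ} (hε : ε ∈ Lspos μ) (hδ : δ ∈ Lspos μ) :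
    ε ⊓ δ ∈ Lspos μ := by
  filter_upwards [hε, hδ, AEEqFun.coeFn_inf ε δ] with ω hεω hδω hinf
  rw [hinf]
  exact lt_inf_iff.2 ⟨hεω, hδω⟩

theorem nonneg_of_mem_Lspos {ε : Ω →ₘ[μ] ℝ} (hε : ε ∈ Lspos μ) : 0 ≤ ε := by
  apply AEEqFun.coeFn_le.1
  filter_upwards [hε, AEEqFun.coeFn_zero (μ := μ) (β := ℝ)] with ω hω hzero
  rw [hzero]
  exact hω.le

theorem isUnit_of_mem_Lspos {ε : Ω →ₘ[μ] ℝ} (hε : ε ∈ Lspos μ) : IsUnit ε := by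
  refine IsUnit.of_mul_eq_one (AEEqFun.compMeasurable (·⁻¹) measurable_inv ε) (AEEqFun.ext ?_)
  filter_upwards [AEEqFun.coeFn_mul ε (AEEqFun.compMeasurable (·⁻¹) measurable_inv ε),
    AEEqFun.coeFn_compMeasurable (·⁻¹) measurable_inv ε, hε,
    AEEqFun.coeFn_one (μ := μ) (β := ℝ)] with ω hmul hinv hpos hone
  rw [hmul, hone, Pi.mul_apply, hinv]
  exact mul_inv_cancel₀ hpos.ne'

end Scalars

section Exhaustion

theorem exists_ae_greatest_of_iUnion_mem (μ : Measure Ω) [SFinite μ] {C : Set (Set Ω)}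
    (hne : C.Nonempty) (hmeas : ∀ A ∈ C, MeasurableSet A)
    (hunion : ∀ A : ℕ → Set Ω, (∀ n, A n ∈ C) → ⋃ n, A n ∈ C) :
    ∃ M ∈ C, ∀ D ∈ C, D ≤ᵐ[μ] M := by
  obtain ⟨m, -, hm, hmC⟩ := exists_seq_tendsto_sSup (hne.image μ.toFinite) (OrderTop.bddAbove _)
  choose A hAC hAm using hmC
  refine ⟨⋃ n, A n, hunion A hAC, fun D hD => ?_⟩
  have hDA : D ∪ ⋃ n, A n ∈ C := by
    rw [show D ∪ ⋃ n, A n = _ from union_iUnion_nat_succ fun n => Nat.casesOn n D A]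
    exact hunion _ fun n => by cases n with | zero => exact hD | succ n => exact hAC n
  have hle : μ.toFinite (D ∪ ⋃ n, A n) ≤ μ.toFinite (⋃ n, A n) := by
    refine (le_sSup (mem_image_of_mem _ hDA)).trans (le_of_tendsto' hm fun n => ?_)
    exact (hAm n).symm.trans_le (measure_mono (subset_iUnion A n))
  have heq : (⋃ n, A n : Set Ω) =ᵐ[μ.toFinite] (D ∪ ⋃ n, A n : Set Ω) :=
    ae_eq_of_subset_of_measure_ge subset_union_right hle
      (hmeas _ (hunion A hAC)).nullMeasurableSet (measure_ne_top _ _)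
  rw [← ae_toFinite (μ := μ)]
  exact subset_union_left.eventuallyLE.trans heq.symm.le

theorem isMeasPartition_disjointed {B : ℕ → Set Ω} (hB : ∀ n, MeasurableSet (B n))
    (hcover : ⋃ n, B n = univ) : IsMeasPartition (disjointed B) :=
  ⟨MeasurableSet.disjointed hB, disjoint_disjointed B, iUnion_disjointed.trans hcover⟩

end Exhaustion

section Gauge

variable {E : Type*} [AddCommGroup E] [Module (Ω →ₘ[μ] ℝ) E] {U : Set E}

theorem HasCCP.hasRelCCP (hU : HasCCP μ U) : HasRelCCP μ U :=
  fun x hx A hA => (hU x hx A hA).2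

theorem HasRelCCP.mem_of_cover (hU : HasRelCCP μ U) {x : ℕ → E} (hx : ∀ n, x n ∈ U)
    {B : ℕ → Set Ω} (hB : ∀ n, MeasurableSet (B n)) (hcover : ⋃ n, B n = univ) {y : E}
    (hy : ∀ n, ind μ (B n) • y = ind μ (B n) • x n) : y ∈ U := by
  refine hU x hx _ (isMeasPartition_disjointed hB hcover) y fun n => ?_
  have hind : ind μ (disjointed B n) = ind μ (disjointed B n) * ind μ (B n) := by
    rw [ind_mul_ind (MeasurableSet.disjointed hB n) (hB n),
      inter_eq_left.2 (disjointed_subset B n)]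
  rw [hind, mul_smul, hy, mul_smul]

theorem HasRelCCP.ind_iUnion_smul_mem (hU : HasRelCCP μ U) {x : E} {A : ℕ → Set Ω}
    (hA : ∀ n, MeasurableSet (A n)) (hx : ∀ n, ind μ (A n) • x ∈ U) :
    ind μ (⋃ n, A n) • x ∈ U := by
  have hM : MeasurableSet (⋃ n, A n) := MeasurableSet.iUnion hA
  have hB : ∀ n, MeasurableSet (A n ∪ (⋃ n, A n)ᶜ) := fun n => (hA n).union hM.compl
  have hcover : ⋃ n, (A n ∪ (⋃ n, A n)ᶜ) = univ := by rw [← iUnion_union, union_compl_self]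
  refine hU.mem_of_cover hx hB hcover fun n => ?_
  have hAM : (A n ∪ (⋃ n, A n)ᶜ) ∩ ⋃ n, A n = A n := by
    rw [union_inter_distrib_right, compl_inter_self, union_empty,
      inter_eq_left.2 (subset_iUnion A n)]
  rw [smul_smul, smul_smul, ind_mul_ind (hB n) hM, ind_mul_ind (hB n) (hA n), hAM,
    inter_eq_right.2 subset_union_left]

theorem HasRelCCP.exists_ae_greatest_ind_smul_mem [SFinite μ] (hU : HasRelCCP μ U)
    (hzero : (0 : E) ∈ U) (x : E) :
    ∃ M, MeasurableSet M ∧ ind μ M • x ∈ U ∧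
      ∀ D, MeasurableSet D → ind μ D • x ∈ U → D ≤ᵐ[μ] M := by
  obtain ⟨M, ⟨hM, hMx⟩, hmax⟩ :=
    exists_ae_greatest_of_iUnion_mem μ (C := {A | MeasurableSet A ∧ ind μ A • x ∈ U})
      ⟨∅, MeasurableSet.empty, by rwa [ind_empty, zero_smul]⟩ (fun _ hA => hA.1)
      fun A hA => ⟨MeasurableSet.iUnion fun n => (hA n).1,
        hU.ind_iUnion_smul_mem (fun n => (hA n).1) fun n => (hA n).2⟩
  exact ⟨M, hM, hMx, fun D hD hDx => hmax D ⟨hD, hDx⟩⟩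

theorem IsL0Balanced.ind_le_one_smul_mem (hU : IsL0Balanced μ U) {ξ : Ω →ₘ[μ] ℝ} (hξ : 0 ≤ ξ)
    {x : E} (hx : x ∈ ξ • U) : ind μ {ω | ξ ω ≤ 1} • x ∈ U := by
  obtain ⟨v, hv, rfl⟩ := hx
  simpa only [smul_smul] using hU v hv _ (aabs_ind_le_one_mul hξ)

/-- `p` is the `L⁰`-gauge (Minkowski functional) of `U`: the pointwise greatest lower bound in
`L⁰` of the scalars dilating `U` over the point. It is a predicate because greatest lower bounds in
`L⁰` need not exist. -/
def IsL0Gauge (μ : Measure Ω) {E : Type*} [AddCommGroup E] [Module (Ω →ₘ[μ] ℝ) E]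
    (U : Set E) (p : E → Ω →ₘ[μ] ℝ) : Prop :=
  ∀ x, IsGLB {ξ : Ω →ₘ[μ] ℝ | ξ ∈ Lpos μ ∧ x ∈ ξ • U} (p x)

variable {p : E → Ω →ₘ[μ] ℝ}

theorem IsL0Gauge.smul_subset (hp : IsL0Gauge μ U p) {ε : Ω →ₘ[μ] ℝ} (hε : 0 ≤ ε) :
    ε • U ⊆ {x | p x ≤ ε} :=
  fun x hx => (hp x).1 ⟨hε, hx⟩

theorem IsL0Gauge.mem_of_ae_lt_one [SFinite μ] (hp : IsL0Gauge μ U p) (hzero : (0 : E) ∈ U)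
    (hbal : IsL0Balanced μ U) (hccp : HasRelCCP μ U) {x : E} (hx : ∀ᵐ ω ∂μ, p x ω < 1) :
    x ∈ U := by
  obtain ⟨M, hM, hMx, hmax⟩ := hccp.exists_ae_greatest_ind_smul_mem hzero x
  have hle : ind μ Mᶜ ≤ p x := (hp x).2 fun ξ ⟨hξ, hxξ⟩ =>
    ind_compl_le hM hξ <| hmax _ (measurableSet_le ξ.measurable measurable_const)
      (hbal.ind_le_one_smul_mem hξ hxξ)
  have hfull : ∀ᵐ ω ∂μ, ω ∈ M := by
    filter_upwards [hx, AEEqFun.coeFn_le.2 hle, coeFn_ind (μ := μ) hM.compl] with ω hlt hle hind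
    by_contra hω
    rw [hind, indicator_of_mem hω] at hle
    exact hlt.not_ge hle
  rwa [ind_eq_one hM hfull, one_smul] at hMx

theorem IsL0Gauge.setOf_le_mem_nhds_zero [TopologicalSpace E]
    [ContinuousConstSMul (Ω →ₘ[μ] ℝ) E] (hp : IsL0Gauge μ U p) (hU : U ∈ 𝓝 0)
    {ε : Ω →ₘ[μ] ℝ} (hε : ε ∈ Lspos μ) : {x | p x ≤ ε} ∈ 𝓝 0 := by
  have hdilate : ε • U ∈ 𝓝 (ε • (0 : E)) :=
    (isUnit_of_mem_Lspos hε).smul_mem_nhds_smul_iff.2 hU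
  rw [smul_zero] at hdilate
  exact mem_of_superset hdilate (hp.smul_subset (nonneg_of_mem_Lspos hε))

end Gauge

section InducedTopology

variable {E : Type*}

/-- The basic neighbourhood of `0` cut out by the family `𝒬` and the radius `ε`. -/
def familyBall (𝒬 : Set (E → Ω →ₘ[μ] ℝ)) (ε : Ω →ₘ[μ] ℝ) : Set E :=
  {x | ∀ q ∈ 𝒬, q x ≤ ε}

theorem familyBall_union_inf_subset (𝒬 ℛ : Set (E → Ω →ₘ[μ] ℝ)) (ε δ : Ω →ₘ[μ] ℝ) :
    familyBall (𝒬 ∪ ℛ) (ε ⊓ δ) ⊆ familyBall 𝒬 ε ∩ familyBall ℛ δ :=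
  fun _ hx => ⟨fun q hq => (hx q (.inl hq)).trans inf_le_left,
    fun q hq => (hx q (.inr hq)).trans inf_le_right⟩

theorem familyBall_mem_of_finite {l : Filter E} {𝒬 : Set (E → Ω →ₘ[μ] ℝ)}
    (hfin : 𝒬.Finite) {ε : Ω →ₘ[μ] ℝ} (h𝒬 : ∀ q ∈ 𝒬, {x | q x ≤ ε} ∈ l) :
    familyBall 𝒬 ε ∈ l := by
  simpa only [familyBall, ofPred_forall] using (biInter_mem hfin).2 h𝒬

/-- The topology induced by a family `𝒮` of functions `E → L⁰`, in practice `L⁰`-seminorms: a set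
is open when around each of its points it contains a translate of some `familyBall` of finitely many
members of `𝒮`, with radius in `L⁰₊₊`. -/
abbrev inducedTopology [Add E] (𝒮 : Set (E → Ω →ₘ[μ] ℝ)) : TopologicalSpace E where
  IsOpen V := ∀ y ∈ V, ∃ 𝒬 : Set (E → Ω →ₘ[μ] ℝ), 𝒬.Finite ∧ 𝒬 ⊆ 𝒮 ∧
    ∃ ε ∈ Lspos μ, ∀ u ∈ familyBall 𝒬 ε, y + u ∈ V
  isOpen_univ _ _ :=
    ⟨∅, finite_empty, empty_subset _, _, const_mem_Lspos one_pos, fun _ _ => mem_univ _⟩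
  isOpen_inter V W hV hW y hy := by
    obtain ⟨𝒬, h𝒬fin, h𝒬, ε, hε, hεV⟩ := hV y hy.1
    obtain ⟨ℛ, hℛfin, hℛ, δ, hδ, hδW⟩ := hW y hy.2
    refine ⟨𝒬 ∪ ℛ, h𝒬fin.union hℛfin, union_subset h𝒬 hℛ, ε ⊓ δ, inf_mem_Lspos hε hδ,
      fun u hu => ?_⟩
    have hu' := familyBall_union_inf_subset 𝒬 ℛ ε δ hu
    exact ⟨hεV u hu'.1, hδW u hu'.2⟩
  isOpen_sUnion S hS y := by
    rintro ⟨V, hV, hy⟩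
    obtain ⟨𝒬, h𝒬fin, h𝒬, ε, hε, hεV⟩ := hS V hV y hy
    exact ⟨𝒬, h𝒬fin, h𝒬, ε, hε, fun u hu => mem_sUnion_of_mem (hεV u hu) hV⟩

theorem eq_inducedTopology_of_hasBasis [AddGroup E] [T : TopologicalSpace E]
    [SeparatelyContinuousAdd E] {𝒮 : Set (E → Ω →ₘ[μ] ℝ)}
    (hbasis : (𝓝 (0 : E)).HasBasis
      (fun i : Set (E → Ω →ₘ[μ] ℝ) × (Ω →ₘ[μ] ℝ) => i.1.Finite ∧ i.1 ⊆ 𝒮 ∧ i.2 ∈ Lspos μ)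
      fun i => familyBall i.1 i.2) :
    T = inducedTopology 𝒮 := by
  refine TopologicalSpace.ext_iff.2 fun V =>
    isOpen_iff_mem_nhds.trans (forall₂_congr fun y _ => ?_)
  have htranslate : map (y + ·) (𝓝 0) = 𝓝 y := by
    simpa only [Homeomorph.coe_addLeft, add_zero] using (Homeomorph.addLeft y).map_nhds_eq 0
  rw [← htranslate, mem_map, hbasis.mem_iff, Prod.exists]
  simp only [exists_and_left, and_assoc, subset_def, mem_preimage]

end InducedTopology

end PaperL0

theorem statement17_general {Ω : Type*} [MeasurableSpace Ω] (μ : Measure Ω) [SFinite μ]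
    {E : Type*} [AddCommGroup E] [Module (Ω →ₘ[μ] ℝ) E]
    [T : TopologicalSpace E] [SeparatelyContinuousAdd E]
    [ContinuousConstSMul (Ω →ₘ[μ] ℝ) E]
    {𝒰 : Set (Set E)} (hbase : (𝓝 (0 : E)).HasBasis (· ∈ 𝒰) id)
    (hbal : ∀ U ∈ 𝒰, IsL0Balanced μ U) (hccp : ∀ U ∈ 𝒰, HasRelCCP μ U)
    {pU : Set E → E → Ω →ₘ[μ] ℝ} (hpU : ∀ U ∈ 𝒰, IsL0Gauge μ U (pU U)) :
    T = inducedTopology (pU '' 𝒰) := by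
  refine eq_inducedTopology_of_hasBasis (hbase.to_hasBasis' (fun U hU => ?_) ?_)
  · refine ⟨({pU U}, AEEqFun.const Ω (1 / 2)), ⟨finite_singleton _,
      singleton_subset_iff.2 (mem_image_of_mem pU hU), const_mem_Lspos one_half_pos⟩, ?_⟩
    intro x hx
    refine (hpU U hU).mem_of_ae_lt_one (mem_of_mem_nhds (hbase.mem_of_mem hU)) (hbal U hU)
      (hccp U hU) ?_
    filter_upwards [AEEqFun.coeFn_le.2 (hx (pU U) rfl), AEEqFun.coeFn_const (μ := μ) Ω (1 / 2 : ℝ)]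
      with ω hle hconst
    exact (hle.trans_eq hconst).trans_lt one_half_lt_one
  · rintro ⟨𝒬, ε⟩ ⟨hfin, hsub, hε⟩
    refine familyBall_mem_of_finite hfin fun q hq => ?_
    obtain ⟨U, hU, rfl⟩ := hsub hq
    exact (hpU U hU).setOf_le_mem_nhds_zero (hbase.mem_of_mem hU) hε

/-- Corollary 3.9: if a topological L⁰-module (E, 𝒯) admits a neighborhood base 𝒰 of 0
consisting of L⁰-convex, L⁰-absorbent, L⁰-balanced sets with the countable concatenation
property, then 𝒯 is induced by the family of L⁰-seminorms {p_U : U ∈ 𝒰}. -/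
theorem statement17
    {Ω : Type*} [MeasurableSpace Ω] (P : Measure Ω) [IsProbabilityMeasure P]
    {E : Type*} [AddCommGroup E] [Module (Ω →ₘ[P] ℝ) E]
    (T : TopologicalSpace E)
    (Tc : TopologicalSpace (Ω →ₘ[P] ℝ))
    (hTc : ∀ W : Set (Ω →ₘ[P] ℝ),
      IsOpen[Tc] W ↔ ∀ ξ ∈ W, ∃ ε ∈ Lspos P, ∀ η ∈ ball P ε, ξ + η ∈ W)
    (haddcont : Continuous[@instTopologicalSpaceProd E E T T, T]
      (fun p : E × E => p.1 + p.2))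
    (hsmulcont : Continuous[@instTopologicalSpaceProd (Ω →ₘ[P] ℝ) E Tc T, T]
      (fun p : (Ω →ₘ[P] ℝ) × E => p.1 • p.2))
    (𝒰 : Set (Set E))
    (hbase : (@nhds E T 0).HasBasis (· ∈ 𝒰) id)
    (hconv : ∀ U ∈ 𝒰, IsL0Convex P U)
    (habs : ∀ U ∈ 𝒰, IsL0Absorbent P U)
    (hbal : ∀ U ∈ 𝒰, IsL0Balanced P U)
    (hccp : ∀ U ∈ 𝒰, HasCCP P U)
    (pU : Set E → E → Ω →ₘ[P] ℝ)
    (hpU : ∀ U ∈ 𝒰, ∀ x : E, IsGLB {ξ : Ω →ₘ[P] ℝ | ξ ∈ Lpos P ∧ x ∈ ξ • U} (pU U x)) :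
    ∀ V : Set E, IsOpen[T] V ↔
      ∀ y ∈ V, ∃ Qs : Set (E → Ω →ₘ[P] ℝ), Qs.Finite ∧ Qs ⊆ (fun U => pU U) '' 𝒰 ∧
        ∃ ε ∈ Lspos P, ∀ u : E, (∀ q ∈ Qs, q u ≤ ε) → y + u ∈ V := by
  have : ContinuousAdd E := ⟨haddcont⟩
  have : ContinuousSMul (Ω →ₘ[P] ℝ) E := ⟨hsmulcont⟩
  exact TopologicalSpace.ext_iff.1
    (statement17_general P hbase hbal (fun U hU => (hccp U hU).hasRelCCP) hpU)
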